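/- Let (S,d) be a geodesic δ-hyperbolic metric space with basepoint e and let x,y,z be three pairwise distinct points of the Gromov boundary ∂S. Then for every K > 0 there exists R > 0 such that for every u ∈ U_R(x), v ∈ U_R(y), w₁,w₂ ∈ U_R(z), and all geodesic segments [u,v] and [w₁,w₂], one has d([u,v],[w₁,w₂]) > K. -/

import Mathlib

/-!
Slimness of triangles gives Gromov's four-point inequality
`(a·c) ≥ min (a·b) (b·c) - 3(δ + 1)` (`gprod_four_point`): the interior point of a side `[a,c]`
lies within about `(a·c)` of the basepoint, while every point of `[a,b]` is at distance at least
`(a·b)` from it. It follows that for distinct boundary points `x ≠ y` the products `(u·v)` with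
`u` close to `x` and `v` close to `y` stay bounded (`exists_gprod_bound`).

If `b ∈ [w₁,w₂]` with `w₁, w₂ ∈ U_R(z)`, then `(b·w₁) ≥ (w₁·w₂)`, which is at least about `R`. If some
`a ∈ [u,v]` had `d(a,b) ≤ K`, then `(a·w₁)`, and hence also `d(a,e)`, would be at least about
`R - K`. As `(a·u) + (a·v) = d(a,e) + (u·v) ≥ d(a,e)`, one of `(a·u)`, `(a·v)` is at least about
`(R - K)/2`, so by the four-point inequality one of `(u·w₁)`, `(v·w₁)` is too. For large `R` this
contradicts the bounds coming from `x ≠ z` and `y ≠ z`.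
-/

/-- A geodesic segment from `u` to `v`: the image of an isometric embedding of
`[0, dist u v]` sending the endpoints to `u` and `v`. -/
def IsGeodesicSegment {S : Type*} [MetricSpace S] (Γ : Set S) (u v : S) : Prop :=
  ∃ γ : ℝ → S, γ 0 = u ∧ γ (dist u v) = v ∧
    (∀ s ∈ Set.Icc (0 : ℝ) (dist u v), ∀ t ∈ Set.Icc (0 : ℝ) (dist u v),
      dist (γ s) (γ t) = |s - t|) ∧
    Γ = γ '' Set.Icc (0 : ℝ) (dist u v)

/-- A geodesic metric space: every pair of points is joined by a geodesic segment. -/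
def GeodesicSpace (S : Type*) [MetricSpace S] : Prop :=
  ∀ u v : S, ∃ Γ : Set S, IsGeodesicSegment Γ u v

/-- `δ`-hyperbolicity: every geodesic triangle is `δ`-slim. -/
def DeltaHyperbolic (S : Type*) [MetricSpace S] (δ : ℝ) : Prop :=
  ∀ x y z : S, ∀ Γ₁ Γ₂ Γ₃ : Set S,
    IsGeodesicSegment Γ₁ x y → IsGeodesicSegment Γ₂ y z → IsGeodesicSegment Γ₃ z x →
    ∀ p ∈ Γ₁, Metric.infDist p (Γ₂ ∪ Γ₃) ≤ δ

/-- The Gromov product of `x` and `y` with respect to the basepoint `e`. -/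
noncomputable def gprod {S : Type*} [MetricSpace S] (e x y : S) : ℝ :=
  (dist x e + dist y e - dist x y) / 2

/-- A sequence converges to infinity if its pairwise Gromov products tend to infinity. -/
def ConvToInfty {S : Type*} [MetricSpace S] (e : S) (s : ℕ → S) : Prop :=
  Filter.Tendsto (fun p : ℕ × ℕ => gprod e (s p.1) (s p.2)) Filter.atTop Filter.atTop

/-- The type of sequences in `S` converging to infinity. -/
def BSeq (S : Type*) [MetricSpace S] (e : S) := {s : ℕ → S // ConvToInfty e s}

/-- Two sequences converging to infinity are equivalent if their mutual Gromov
products tend to infinity. -/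
def bequiv {S : Type*} [MetricSpace S] (e : S) (s t : BSeq S e) : Prop :=
  Filter.Tendsto (fun n => gprod e (s.1 n) (t.1 n)) Filter.atTop Filter.atTop

/-- The Gromov boundary of `S` with respect to the basepoint `e`. -/
def GBoundary (S : Type*) [MetricSpace S] (e : S) := Quot (bequiv (S := S) e)

/-- A sequence in `S` tends to the boundary point `x`. -/
def TendstoBd {S : Type*} [MetricSpace S] (e : S) (s : ℕ → S) (x : GBoundary S e) : Prop :=
  ∃ h : ConvToInfty e s, Quot.mk _ (⟨s, h⟩ : BSeq S e) = x

/-- The Gromov product of a point `u ∈ S` with a boundary point `x`: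
the infimum over sequences tending to `x` of the liminf of Gromov products. -/
noncomputable def gprodSB {S : Type*} [MetricSpace S] (e u : S) (x : GBoundary S e) : EReal :=
  sInf {r : EReal | ∃ s : ℕ → S, TendstoBd e s x ∧
    r = Filter.liminf (fun n => (gprod e u (s n) : EReal)) Filter.atTop}

/-- The Gromov product of two boundary points. -/
noncomputable def gprodBB {S : Type*} [MetricSpace S] (e : S) (x y : GBoundary S e) : EReal :=
  sInf {r : EReal | ∃ s t : ℕ → S, TendstoBd e s x ∧ TendstoBd e t y ∧
    r = Filter.liminf (fun p : ℕ × ℕ => (gprod e (s p.1) (t p.2) : EReal)) Filter.atTop}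

/-- `UK e K x = {s ∈ S | (x·s)_e > K}`. -/
def UK {S : Type*} [MetricSpace S] (e : S) (K : ℝ) (x : GBoundary S e) : Set S :=
  {u : S | (K : EReal) < gprodSB e u x}

/-- `d'(x,y) = exp (−ζ (x·y)_e)` on the boundary (equal to `0` when the product is `∞`). -/
noncomputable def dExp {S : Type*} [MetricSpace S] (e : S) (ζ : ℝ) (x y : GBoundary S e) : ℝ :=
  if gprodBB e x y = ⊤ then 0 else Real.exp (-ζ * (gprodBB e x y).toReal)

/-- The chain metric `ρ(x,y) = inf Σ d'(s_k, s_{k+1})` over finite chains from `x` to `y`. -/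
noncomputable def rhoChain {S : Type*} [MetricSpace S] (e : S) (ζ : ℝ)
    (x y : GBoundary S e) : ℝ :=
  sInf {r : ℝ | ∃ (n : ℕ) (c : ℕ → GBoundary S e), c 0 = x ∧ c n = y ∧
    r = ∑ k ∈ Finset.range n, dExp e ζ (c k) (c (k + 1))}

/-- `ρ` is a metric. -/
def IsMetricFn {B : Type*} (ρ : B → B → ℝ) : Prop :=
  (∀ x y, 0 ≤ ρ x y) ∧ (∀ x y, ρ x y = 0 ↔ x = y) ∧ (∀ x y, ρ x y = ρ y x) ∧
  ∀ x y z, ρ x z ≤ ρ x y + ρ y z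

/-- `ζ` is a suitable visual parameter: `ζ > 0`, the associated chain function `ρ` is a
metric on the boundary, and `d'/2 ≤ ρ ≤ d'`. -/
def VisualParam {S : Type*} [MetricSpace S] (e : S) (ζ : ℝ) : Prop :=
  0 < ζ ∧ IsMetricFn (rhoChain e ζ) ∧
  ∀ x y : GBoundary S e, dExp e ζ x y / 2 ≤ rhoChain e ζ x y ∧ rhoChain e ζ x y ≤ dExp e ζ x y

/-- The topology on the Gromov boundary induced by the visual metric `ρ`. -/
noncomputable def bdTopology (S : Type*) [MetricSpace S] (e : S) (ζ : ℝ) :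
    TopologicalSpace (GBoundary S e) :=
  TopologicalSpace.generateFrom
    {B | ∃ (x : GBoundary S e) (ε : ℝ), 0 < ε ∧ B = {y | rhoChain e ζ x y < ε}}

lemma IsGeodesicSegment.dist_add {S : Type*} [MetricSpace S] {Γ : Set S} {u v p : S}
    (h : IsGeodesicSegment Γ u v) (hp : p ∈ Γ) : dist u p + dist p v = dist u v := by
  obtain ⟨γ, h0, h1, hd, rfl⟩ := h
  obtain ⟨t, ht, rfl⟩ := hp
  have e1 := hd 0 ⟨le_rfl, dist_nonneg⟩ t ht
  have e2 := hd t ht (dist u v) ⟨dist_nonneg, le_rfl⟩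
  rw [h0, zero_sub, abs_neg, abs_of_nonneg ht.1] at e1
  rw [h1, abs_of_nonpos (by linarith [ht.2])] at e2
  linarith

lemma IsGeodesicSegment.nonempty {S : Type*} [MetricSpace S] {Γ : Set S} {u v : S}
    (h : IsGeodesicSegment Γ u v) : Γ.Nonempty := by
  obtain ⟨γ, -, -, -, rfl⟩ := h
  exact ⟨γ 0, 0, ⟨le_rfl, dist_nonneg⟩, rfl⟩

lemma IsGeodesicSegment.exists_dist_eq {S : Type*} [MetricSpace S] {Γ : Set S} {u v : S}
    (h : IsGeodesicSegment Γ u v) {t : ℝ} (h0 : 0 ≤ t) (h1 : t ≤ dist u v) :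
    ∃ p ∈ Γ, dist u p = t := by
  obtain ⟨γ, hu, -, hd, rfl⟩ := h
  refine ⟨γ t, ⟨t, ⟨h0, h1⟩, rfl⟩, ?_⟩
  have e1 := hd 0 ⟨le_rfl, dist_nonneg⟩ t ⟨h0, h1⟩
  rwa [hu, zero_sub, abs_neg, abs_of_nonneg h0] at e1

/-- Slimness with an actual nearby point; the slack `1` replaces attainment of the infimum. -/
lemma DeltaHyperbolic.exists_near {S : Type*} [MetricSpace S] {δ : ℝ}
    (hhyp : DeltaHyperbolic S δ) {x y z : S} {Γ₁ Γ₂ Γ₃ : Set S}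
    (h₁ : IsGeodesicSegment Γ₁ x y) (h₂ : IsGeodesicSegment Γ₂ y z)
    (h₃ : IsGeodesicSegment Γ₃ z x) {p : S} (hp : p ∈ Γ₁) :
    ∃ q, (q ∈ Γ₂ ∨ q ∈ Γ₃) ∧ dist p q < δ + 1 := by
  have h := hhyp x y z Γ₁ Γ₂ Γ₃ h₁ h₂ h₃ p hp
  exact (Metric.infDist_lt_iff (h₂.nonempty.inl)).1 (lt_of_le_of_lt h (lt_add_one δ))

lemma IsGeodesicSegment.gprod_le_dist {S : Type*} [MetricSpace S] {Γ : Set S} {u v p : S}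
    (h : IsGeodesicSegment Γ u v) (hp : p ∈ Γ) (e : S) : gprod e u v ≤ dist p e := by
  have h1 := h.dist_add hp
  have h2 := dist_triangle u p e
  have h3 := dist_triangle v p e
  rw [dist_comm v p] at h3
  unfold gprod
  linarith

/-- The point of `[a,c]` at distance `(e·c)_a` from `a` is almost as close to `e` as the lower
bound `gprod_le_dist` allows. -/
lemma exists_dist_le_gprod {S : Type*} [MetricSpace S] {δ : ℝ} (hgeo : GeodesicSpace S)
    (hhyp : DeltaHyperbolic S δ) (e : S) {a c : S} {Γ : Set S}
    (h : IsGeodesicSegment Γ a c) : ∃ p ∈ Γ, dist p e ≤ gprod e a c + 2 * (δ + 1) := by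
  obtain ⟨p, hp, hap⟩ := h.exists_dist_eq (t := dist a e - gprod e a c)
    (by unfold gprod; linarith [dist_triangle_right c e a, dist_triangle c a e, dist_comm c a])
    (by unfold gprod; linarith [dist_triangle a c e])
  have hpc := h.dist_add hp
  obtain ⟨Γ₂, h₂⟩ := hgeo c e
  obtain ⟨Γ₃, h₃⟩ := hgeo e a
  obtain ⟨q, hq, hpq⟩ := hhyp.exists_near h h₂ h₃ hp
  refine ⟨p, hp, ?_⟩
  have t1 := dist_triangle p q e
  rcases hq with hq | hq
  · have h4 := h₂.dist_add hq
    have t2 := dist_triangle p q c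
    rw [dist_comm q c] at t2
    unfold gprod at *
    linarith
  · have h4 := h₃.dist_add hq
    have t2 := dist_triangle a q p
    rw [dist_comm q p, dist_comm a q] at t2
    rw [dist_comm e q, dist_comm e a] at h4
    unfold gprod at *
    linarith

/-- Gromov's four-point inequality, deduced from slim triangles. -/
lemma gprod_four_point {S : Type*} [MetricSpace S] {δ : ℝ} (hgeo : GeodesicSpace S)
    (hhyp : DeltaHyperbolic S δ) (e a b c : S) :
    min (gprod e a b) (gprod e b c) ≤ gprod e a c + 3 * (δ + 1) := by
  obtain ⟨Γ₁, h₁⟩ := hgeo a c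
  obtain ⟨Γ₂, h₂⟩ := hgeo c b
  obtain ⟨Γ₃, h₃⟩ := hgeo b a
  obtain ⟨p, hp, hpe⟩ := exists_dist_le_gprod hgeo hhyp e h₁
  obtain ⟨q, hq, hpq⟩ := hhyp.exists_near h₁ h₂ h₃ hp
  have t1 := dist_triangle q p e
  rw [dist_comm q p] at t1
  rcases hq with hq | hq
  · have h4 := h₂.gprod_le_dist hq e
    refine (min_le_right _ _).trans ?_
    unfold gprod at *
    linarith [dist_comm b c]
  · have h4 := h₃.gprod_le_dist hq e
    refine (min_le_left _ _).trans ?_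
    unfold gprod at *
    linarith [dist_comm b a]

lemma gprod_symm {S : Type*} [MetricSpace S] (e a b : S) : gprod e a b = gprod e b a := by
  unfold gprod
  rw [dist_comm a b]
  ring

lemma eventually_lt_gprod {S : Type*} [MetricSpace S] {e u : S} {R : ℝ} {s : BSeq S e}
    (hu : u ∈ UK e R (Quot.mk _ s)) : ∀ᶠ n in Filter.atTop, R < gprod e u (s.1 n) := by
  have h1 : gprodSB e u (Quot.mk _ s) ≤
      Filter.liminf (fun n => (gprod e u (s.1 n) : EReal)) Filter.atTop :=
    sInf_le ⟨s.1, ⟨s.2, rfl⟩, rfl⟩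
  have h2 := Filter.eventually_lt_of_lt_liminf (lt_of_lt_of_le hu h1)
  filter_upwards [h2] with n hn
  exact_mod_cast hn

/-- Points in small neighbourhoods of distinct boundary points have bounded Gromov product. -/
lemma exists_gprod_bound {S : Type*} [MetricSpace S] {δ : ℝ} (hδ : 0 ≤ δ)
    (hgeo : GeodesicSpace S) (hhyp : DeltaHyperbolic S δ) (e : S) (x y : GBoundary S e)
    (hxy : x ≠ y) : ∃ M : ℝ, ∀ R : ℝ, M ≤ R → ∀ u ∈ UK e R x, ∀ v ∈ UK e R y,
      gprod e u v < M := by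
  obtain ⟨s, rfl⟩ := Quot.exists_rep x
  obtain ⟨t, rfl⟩ := Quot.exists_rep y
  have hn : ¬ bequiv e s t := fun h => hxy (Quot.sound h)
  unfold bequiv at hn
  rw [Filter.tendsto_atTop] at hn
  push Not at hn
  obtain ⟨M, hM⟩ := hn
  refine ⟨M + 6 * (δ + 1), fun R hR u hu v hv => ?_⟩
  -- Compare `u, v` with terms of representing sequences along `s_n, u, v, t_n`.
  obtain ⟨n, hst, hus, hvt⟩ :=
    (hM.and_eventually ((eventually_lt_gprod hu).and (eventually_lt_gprod hv))).exists
  have f1 := gprod_four_point hgeo hhyp e (s.1 n) u (t.1 n)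
  have f2 := gprod_four_point hgeo hhyp e u v (t.1 n)
  rw [gprod_symm e (s.1 n) u] at f1
  rcases min_le_iff.1 f1 with f1 | f1
  · linarith
  · rcases min_le_iff.1 f2 with f2 | f2
    · linarith
    · linarith

/-- For three pairwise distinct boundary points `x, y, z` and every
`K > 0` there is `R > 0` such that geodesics from `U_R(x)` to `U_R(y)` stay at distance
`> K` from geodesics between points of `U_R(z)`. -/
theorem statement17 {S : Type*} [MetricSpace S] (δ : ℝ) (hδ : 0 ≤ δ)
    (hgeo : GeodesicSpace S) (hhyp : DeltaHyperbolic S δ) (e : S)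
    (x y z : GBoundary S e) (hxy : x ≠ y) (hyz : y ≠ z) (hxz : x ≠ z) :
    ∀ K : ℝ, 0 < K → ∃ R : ℝ, 0 < R ∧
      ∀ u v w₁ w₂ : S, u ∈ UK e R x → v ∈ UK e R y → w₁ ∈ UK e R z → w₂ ∈ UK e R z →
        ∀ Γ Δ : Set S, IsGeodesicSegment Γ u v → IsGeodesicSegment Δ w₁ w₂ →
          ∀ a ∈ Γ, ∀ b ∈ Δ, K < dist a b := by
  intro K hK
  obtain ⟨M₁, hM₁⟩ := exists_gprod_bound hδ hgeo hhyp e x z hxz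
  obtain ⟨M₂, hM₂⟩ := exists_gprod_bound hδ hgeo hhyp e y z hyz
  have a1 := le_abs_self M₁
  have a2 := le_abs_self M₂
  have b1 := abs_nonneg M₁
  have b2 := abs_nonneg M₂
  -- With `C = 3(δ + 1)`, this `R` satisfies `(R - C - K) / 2 - C = |M₁| + |M₂|`.
  refine ⟨2 * (|M₁| + |M₂|) + 9 * (δ + 1) + K, by linarith, ?_⟩
  intro u v w₁ w₂ hu hv hw₁ hw₂ Γ Δ hΓ hΔ a ha b hb
  by_contra! hab
  have huw := hM₁ _ (by linarith) u hu w₁ hw₁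
  have hvw := hM₂ _ (by linarith) v hv w₁ hw₁
  have hww : 2 * (|M₁| + |M₂|) + 6 * (δ + 1) + K ≤ gprod e w₁ w₂ := by
    obtain ⟨t, rfl⟩ := Quot.exists_rep z
    obtain ⟨n, h1, h2⟩ := ((eventually_lt_gprod hw₁).and (eventually_lt_gprod hw₂)).exists
    have f := gprod_four_point hgeo hhyp e w₁ (t.1 n) w₂
    rw [gprod_symm e (t.1 n) w₂] at f
    rcases min_le_iff.1 f with f | f <;> linarith
  have hbw : gprod e w₁ w₂ ≤ gprod e b w₁ := by
    have h1 := hΔ.dist_add hb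
    have h2 := dist_triangle w₂ b e
    rw [dist_comm w₂ b] at h2
    unfold gprod
    linarith [dist_comm b w₁]
  have haw : gprod e b w₁ - K ≤ gprod e a w₁ := by
    have h1 := dist_triangle b a e
    have h2 := dist_triangle a b w₁
    rw [dist_comm b a] at h1
    unfold gprod
    linarith
  have hae : gprod e a w₁ ≤ dist a e := by
    unfold gprod
    linarith [dist_triangle w₁ a e, dist_comm w₁ a]
  have hsum : dist a e ≤ gprod e u a + gprod e v a := by
    have h1 := hΓ.dist_add ha
    unfold gprod
    linarith [dist_triangle u e v, dist_comm e v, dist_comm v a]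
  have f1 := gprod_four_point hgeo hhyp e u a w₁
  have f2 := gprod_four_point hgeo hhyp e v a w₁
  rcases min_le_iff.1 f1 with f1 | f1
  · rcases min_le_iff.1 f2 with f2 | f2 <;> linarith
  · linarith
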